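/- Let $f:\mathbb{D}\to\mathbb{D}$ be injective holomorphic with $f(0)=0$, $w\in\mathbb{D}\setminus\{0\}$, and define $I_{upper}(f,w) = \log\left[\frac{|f(w)|}{(1-|f(w)|)^2}\cdot\frac{(1-|w|)^2}{|w|\,|f'(0)|}\right]$. Then $I_{upper}(f,w)\leq 0$. -/

import Mathlib

open Complex Metric

/-!
Compose `f` with the rotated Koebe function `z ↦ z / (1 - e z)²`, where `|e| = 1` is chosen so that
`e f(w) = |f(w)|`. The result `g` is univalent on the unit disc, vanishes at `0`, has the same
derivative there as `f`, and `|g(w)| = |f(w)| / (1 - |f(w)|)²`, so the claim is Koebe's upper growth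
bound `|g(w)| ≤ |g'(0)| |w| / (1 - |w|)²`. The growth bound integrates the distortion bound
`|g'(z)| ≤ |g'(0)| (1 + |z|) / (1 - |z|)³` along a ray, and the distortion bound integrates
Bieberbach's inequality `|a₂| ≤ 2`, transported from `0` to every point by disc automorphisms.

For Bieberbach's inequality write `g(z) = z exp(L(z))`, normalized to `g'(0) = 1`, so that
`a₂ = L'(0)`, and compare areas under `g ^ (-α)` rather than under the usual `g ^ (-1/2)`. On the
annulus `ρ < |z| < 1` univalence bounds the area of the image, counted in `|w| ^ (-2α - 2)` times
Lebesgue measure, by that of `|w| ≥ m`, where `m` is at most the minimum of `|g|` on the inner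
circle; the first two Taylor coefficients bound it from below. For `α < 1/2` the crude choice
`m = ρ exp(-Cρ)` loses only `O(ρ ^ (1 - 2α))`, so `ρ → 0` gives `α (1 - α) |a₂|² ≤ 1`, and
`α → 1/2` gives `|a₂| ≤ 2`.
-/

open Filter MeasureTheory Set
open scoped ComplexConjugate Real Topology

section CircleAverages

open Real (circleAverage)

variable {P : ℂ → ℂ} {c : ℂ} {r R : ℝ}

theorem circleAverage_eq_of_differentiableOn_ball (hP : DifferentiableOn ℂ P (ball c R))
    (hr : |r| < R) : circleAverage P c r = P c :=
  (hP.diffContOnCl_ball (closedBall_subset_ball hr)).circleAverage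

theorem circleAverage_norm_sq_eq (hP : DifferentiableOn ℂ P (ball c R)) (hr : |r| < R) :
    circleAverage (fun z => ‖P z‖ ^ 2) c r =
      ‖P c‖ ^ 2 + r ^ 2 * circleAverage (fun z => ‖dslope P c z‖ ^ 2) c r := by
  have hR : 0 < R := (abs_nonneg r).trans_lt hr
  have hsphere : sphere c |r| ⊆ ball c R := sphere_subset_closedBall.trans
    (closedBall_subset_ball hr)
  have hD : DifferentiableOn ℂ (dslope P c) (ball c R) :=
    (differentiableOn_dslope (ball_mem_nhds c hR)).2 hP
  set K : ℂ → ℂ := fun z => 2 * conj (P c) * ((z - c) * dslope P c z) with hK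
  have hKd : DifferentiableOn ℂ K (ball c R) := by fun_prop
  have hKint : CircleIntegrable K c r := (hKd.continuousOn.mono hsphere).circleIntegrable'
  have hKre : circleAverage (reCLM ∘ K) c r = 0 := by
    rw [reCLM.circleAverage_comp_comm hKint, circleAverage_eq_of_differentiableOn_ball hKd hr]
    simp [hK]
  have hDint : CircleIntegrable (fun z => r ^ 2 * ‖dslope P c z‖ ^ 2) c r :=
    (((hD.continuousOn.mono hsphere).norm.pow 2).const_smul (r ^ 2)).circleIntegrable'
  have hexpand : EqOn (fun z => ‖P z‖ ^ 2)
      (fun z => (‖P c‖ ^ 2 + (reCLM ∘ K) z) + r ^ 2 * ‖dslope P c z‖ ^ 2) (sphere c |r|) := by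
    intro z hz
    have hPz : P z = P c + (z - c) * dslope P c z := by
      rw [← smul_eq_mul, sub_smul_dslope, add_sub_cancel]
    have hzr : ‖z - c‖ ^ 2 = r ^ 2 := by rw [mem_sphere_iff_norm.1 hz, sq_abs]
    dsimp only
    rw [hPz, ← hzr, ← mul_pow, ← norm_mul]
    simp only [hK, Function.comp_apply, reCLM_apply]
    generalize (z - c) * dslope P c z = u
    simp only [Complex.sq_norm, normSq_apply, mul_re, mul_im, add_re, add_im, conj_re, conj_im,
      re_ofNat, im_ofNat]
    ring
  have hconst := circleIntegrable_const (‖P c‖ ^ 2) c r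
  have hKre_int : CircleIntegrable (reCLM ∘ K) c r :=
    (continuous_re.comp_continuousOn (hKd.continuousOn.mono hsphere)).circleIntegrable'
  have hsum_int : CircleIntegrable (fun z => ‖P c‖ ^ 2 + (reCLM ∘ K) z) c r :=
    hconst.add hKre_int
  rw [Real.circleAverage_congr_sphere hexpand, Real.circleAverage_fun_add hsum_int hDint,
    Real.circleAverage_fun_add hconst hKre_int, hKre, Real.circleAverage_const, add_zero]
  congr 1
  exact Real.circleAverage_fun_smul (a := r ^ 2)

theorem norm_sq_le_circleAverage_norm_sq (hP : DifferentiableOn ℂ P (ball c R)) (hr : |r| < R) :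
    ‖P c‖ ^ 2 ≤ circleAverage (fun z => ‖P z‖ ^ 2) c r := by
  rw [circleAverage_norm_sq_eq hP hr]
  have : 0 ≤ circleAverage (fun z => ‖dslope P c z‖ ^ 2) c r :=
    Real.circleAverage_nonneg_of_nonneg fun z _ => by positivity
  exact le_add_of_nonneg_right (by positivity)

theorem norm_sq_add_norm_deriv_sq_le_circleAverage (hP : DifferentiableOn ℂ P (ball c R))
    (hr : |r| < R) :
    ‖P c‖ ^ 2 + r ^ 2 * ‖deriv P c‖ ^ 2 ≤ circleAverage (fun z => ‖P z‖ ^ 2) c r := by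
  have hD : DifferentiableOn ℂ (dslope P c) (ball c R) :=
    (differentiableOn_dslope (ball_mem_nhds c ((abs_nonneg r).trans_lt hr))).2 hP
  rw [circleAverage_norm_sq_eq hP hr, ← dslope_same P c]
  gcongr
  exact norm_sq_le_circleAverage_norm_sq hD hr

end CircleAverages

section PolarCoordinates

open Real (circleAverage)

theorem lintegral_circleMap_eq_ofReal_circleAverage {φ : ℂ → ℝ} {c : ℂ} {r : ℝ}
    (hφ : CircleIntegrable φ c r) (hφ0 : ∀ z ∈ sphere c |r|, 0 ≤ φ z) :
    ∫⁻ θ in Ioo (-π) π, ENNReal.ofReal (φ (circleMap c r θ)) =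
      ENNReal.ofReal (2 * π * circleAverage φ c r) := by
  have hper : Function.Periodic (fun θ => φ (circleMap c r θ)) (2 * π) :=
    (periodic_circleMap c r).comp φ
  have hshift : ∫ θ in (-π)..π, φ (circleMap c r θ) = 2 * π * circleAverage φ c r := by
    have h := hper.intervalIntegral_add_eq (-π) 0
    rw [show -π + 2 * π = π by ring, zero_add] at h
    rw [h, Real.circleAverage_def, smul_eq_mul, mul_inv_cancel_left₀ Real.two_pi_pos.ne']
  have hint : IntervalIntegrable (fun θ => φ (circleMap c r θ)) volume (-π) π :=
    hper.intervalIntegrable Real.two_pi_pos.ne' (t := 0)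
      (by simpa [circleIntegrable_def] using hφ) _ _
  rw [← hshift, intervalIntegral.integral_of_le (by linarith [Real.pi_pos]),
    integral_Ioc_eq_integral_Ioo, ofReal_integral_eq_lintegral_ofReal]
  · exact (intervalIntegrable_iff_integrableOn_Ioo_of_le (by linarith [Real.pi_pos])).1 hint
  · exact ae_of_all _ fun θ => hφ0 _ (circleMap_mem_sphere' c r θ)

theorem lintegral_eq_lintegral_circleMap {F : ℂ → ENNReal} (hF : Measurable F) :
    ∫⁻ z, F z =
      ∫⁻ r in Ioi (0 : ℝ), ENNReal.ofReal r * ∫⁻ θ in Ioo (-π) π, F (circleMap 0 r θ) := by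
  have hpolar : ∀ p : ℝ × ℝ, Complex.polarCoord.symm p = circleMap 0 p.1 p.2 := fun p => by
    simp [circleMap, Complex.exp_mul_I]
  have hmeas : Measurable fun p : ℝ × ℝ => ENNReal.ofReal p.1 * F (circleMap 0 p.1 p.2) :=
    (ENNReal.measurable_ofReal.comp measurable_fst).mul
      (hF.comp (by unfold circleMap; fun_prop))
  rw [← Complex.lintegral_comp_polarCoord_symm]
  simp only [hpolar, smul_eq_mul, polarCoord_target]
  rw [Measure.volume_eq_prod, setLIntegral_prod _ hmeas.aemeasurable]
  simp only [lintegral_const_mul' _ _ ENNReal.ofReal_ne_top]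

theorem setLIntegral_norm_mem_eq_circleAverage {T : Set ℝ} (hT : MeasurableSet T)
    (hTpos : T ⊆ Ioi 0) {φ : ℂ → ℝ} (hφ : ContinuousOn φ {z | ‖z‖ ∈ T}) (hφ0 : ∀ z, 0 ≤ φ z) :
    ∫⁻ z in {z : ℂ | ‖z‖ ∈ T}, ENNReal.ofReal (φ z) =
      ∫⁻ r in T, ENNReal.ofReal (2 * π * r * circleAverage φ 0 r) := by
  set S : Set ℂ := {z | ‖z‖ ∈ T} with hS
  have hSmeas : MeasurableSet S := measurable_norm hT
  have hmeas : Measurable (S.indicator fun z => ENNReal.ofReal (φ z)) := by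
    classical
    rw [← piecewise_eq_indicator]
    exact (ENNReal.continuous_ofReal.comp_continuousOn hφ).measurable_piecewise
      continuousOn_const hSmeas
  rw [← lintegral_indicator hSmeas, lintegral_eq_lintegral_circleMap hmeas,
    ← inter_eq_left.2 hTpos, ← setLIntegral_indicator hT]
  refine setLIntegral_congr_fun measurableSet_Ioi fun r hr => ?_
  have hnorm : ∀ θ, ‖circleMap 0 r θ‖ = r := fun θ => by simp [abs_of_pos (mem_Ioi.1 hr)]
  by_cases hrT : r ∈ T
  · have hmem : ∀ θ, circleMap 0 r θ ∈ S := fun θ => by rwa [hS, mem_ofPred_eq, hnorm]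
    have hsphere : sphere 0 |r| ⊆ S := fun z hz => by
      rwa [hS, mem_ofPred_eq, mem_sphere_zero_iff_norm.1 hz, abs_of_pos (mem_Ioi.1 hr)]
    simp only [indicator_of_mem, hmem, hrT]
    rw [lintegral_circleMap_eq_ofReal_circleAverage (hφ.mono hsphere).circleIntegrable'
      fun z _ => hφ0 z, ← ENNReal.ofReal_mul (mem_Ioi.1 hr).le]
    ring_nf
  · have hmem : ∀ θ, circleMap 0 r θ ∉ S := fun θ => by rwa [hS, mem_ofPred_eq, hnorm]
    simp [indicator_of_notMem, hmem, hrT]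

theorem continuousOn_norm_rpow {T : Set ℝ} (hT : T ⊆ Ioi 0) (s : ℝ) :
    ContinuousOn (fun z : ℂ => ‖z‖ ^ s) {z | ‖z‖ ∈ T} :=
  continuous_norm.continuousOn.rpow_const fun _ hz => Or.inl (mem_Ioi.1 (hT hz)).ne'

theorem setLIntegral_norm_rpow_Ici {s m : ℝ} (hs : s < -2) (hm : 0 < m) :
    ∫⁻ w in {w : ℂ | ‖w‖ ∈ Ici m}, ENNReal.ofReal (‖w‖ ^ s) =
      ENNReal.ofReal (2 * π * (-m ^ (s + 2) / (s + 2))) := by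
  have hsub : Ici m ⊆ Ioi 0 := fun r hr => hm.trans_le hr
  have hradial : ∀ r ∈ Ici m, 2 * π * r * circleAverage (fun w => ‖w‖ ^ s) 0 r =
      2 * π * r ^ (s + 1) := by
    intro r hr
    have hr0 : 0 < r := hsub hr
    rw [Real.circleAverage_const_on_circle (a := r ^ s) fun w hw => by
      rw [mem_sphere_zero_iff_norm.1 hw, abs_of_pos hr0], Real.rpow_add_one hr0.ne']
    ring
  rw [setLIntegral_norm_mem_eq_circleAverage measurableSet_Ici hsub
      (continuousOn_norm_rpow hsub s) fun w => by positivity,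
    setLIntegral_congr_fun measurableSet_Ici fun r hr => by rw [hradial r hr],
    setLIntegral_congr Ioi_ae_eq_Ici.symm,
    ← ofReal_integral_eq_lintegral_ofReal
      ((integrableOn_Ioi_rpow_of_lt (by linarith) hm).const_mul _),
    integral_const_mul, integral_Ioi_rpow_of_lt (by linarith) hm, add_assoc, one_add_one_eq_two]
  refine (ae_restrict_iff' measurableSet_Ioi).2 (ae_of_all _ fun r hr => ?_)
  have : 0 < r := hm.trans hr
  positivity

theorem ofReal_integral_le_setLIntegral_norm_rpow_mul {P : ℂ → ℂ} {ρ R : ℝ}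
    (hP : DifferentiableOn ℂ P (ball 0 R)) (hρ : 0 < ρ) (hρR : ρ ≤ R) (s : ℝ) :
    ENNReal.ofReal (2 * π *
        ∫ r in ρ..R, (‖P 0‖ ^ 2 * r ^ (s + 1) + ‖deriv P 0‖ ^ 2 * r ^ (s + 3))) ≤
      ∫⁻ z in {z : ℂ | ‖z‖ ∈ Ioo ρ R}, ENNReal.ofReal (‖z‖ ^ s * ‖P z‖ ^ 2) := by
  have hsub : Ioo ρ R ⊆ Ioi 0 := fun r hr => hρ.trans hr.1
  have hannulus : {z : ℂ | ‖z‖ ∈ Ioo ρ R} ⊆ ball 0 R := fun z hz => mem_ball_zero_iff.2 hz.2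
  have hcont : ContinuousOn (fun z => ‖z‖ ^ s * ‖P z‖ ^ 2) {z : ℂ | ‖z‖ ∈ Ioo ρ R} :=
    (continuousOn_norm_rpow hsub s).mul ((hP.continuousOn.mono hannulus).norm.pow 2)
  have hrpow : ∀ p : ℝ, ContinuousOn (fun r : ℝ => r ^ p) (Icc ρ R) := fun p =>
    continuousOn_id.rpow_const fun r hr => Or.inl (hρ.trans_le hr.1).ne'
  rw [setLIntegral_norm_mem_eq_circleAverage measurableSet_Ioo hsub hcont
      fun z => by positivity, ← intervalIntegral.integral_const_mul,
    intervalIntegral.integral_of_le hρR, integral_Ioc_eq_integral_Ioo,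
    ofReal_integral_eq_lintegral_ofReal]
  · refine setLIntegral_mono' measurableSet_Ioo fun r hr => ENNReal.ofReal_le_ofReal ?_
    have hr0 : 0 < r := hsub hr
    have hweight : circleAverage (fun z => ‖z‖ ^ s * ‖P z‖ ^ 2) 0 r =
        r ^ s * circleAverage (fun z => ‖P z‖ ^ 2) 0 r := by
      rw [← smul_eq_mul, ← Real.circleAverage_fun_smul]
      refine Real.circleAverage_congr_sphere fun z hz => ?_
      simp only [mem_sphere_zero_iff_norm.1 hz, abs_of_pos hr0, smul_eq_mul]
    rw [hweight]
    calc 2 * π * (‖P 0‖ ^ 2 * r ^ (s + 1) + ‖deriv P 0‖ ^ 2 * r ^ (s + 3))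
        = 2 * π * r * (r ^ s * (‖P 0‖ ^ 2 + r ^ 2 * ‖deriv P 0‖ ^ 2)) := by
          rw [Real.rpow_add_one hr0.ne', show s + 3 = s + (3 : ℕ) by norm_num,
            Real.rpow_add_natCast hr0.ne']
          ring
      _ ≤ 2 * π * r * (r ^ s * circleAverage (fun z => ‖P z‖ ^ 2) 0 r) := by
          gcongr
          exact norm_sq_add_norm_deriv_sq_le_circleAverage hP (by rw [abs_of_pos hr0]; exact hr.2)
  · exact ((((hrpow (s + 1)).const_mul _).add ((hrpow (s + 3)).const_mul _)).const_mul _)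
      |>.integrableOn_Icc |>.mono_set Ioo_subset_Icc_self
  · refine (ae_restrict_iff' measurableSet_Ioo).2 (ae_of_all _ fun r hr => ?_)
    have : 0 < r := hsub hr
    positivity

end PolarCoordinates

theorem lintegral_image_eq_lintegral_norm_deriv_sq_mul {s : Set ℂ} {g g' : ℂ → ℂ}
    (hs : MeasurableSet s) (hg : ∀ z ∈ s, HasDerivAt g (g' z) z) (hinj : InjOn g s)
    (F : ℂ → ENNReal) :
    ∫⁻ w in g '' s, F w = ∫⁻ z in s, ENNReal.ofReal (‖g' z‖ ^ 2) * F (g z) := by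
  rw [lintegral_image_eq_lintegral_abs_det_fderiv_mul volume hs
    (fun z hz => ((hg z hz).hasFDerivAt.restrictScalars ℝ).hasFDerivWithinAt) hinj]
  simp [ContinuousLinearMap.det, LinearMap.det_restrictScalars, Algebra.norm_complex_eq,
    normSq_eq_norm_sq]

/-- Univalent functions: holomorphic and injective on `U`. Values outside `U` are irrelevant. -/
structure IsUnivalentOn (g : ℂ → ℂ) (U : Set ℂ) : Prop where
  differentiableOn : DifferentiableOn ℂ g U
  injOn : InjOn g U

namespace IsUnivalentOn

variable {g h : ℂ → ℂ} {U V : Set ℂ} {c : ℂ} {ρ R m : ℝ}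

theorem mono (hg : IsUnivalentOn g U) (hVU : V ⊆ U) : IsUnivalentOn g V :=
  ⟨hg.differentiableOn.mono hVU, hg.injOn.mono hVU⟩

theorem comp (hg : IsUnivalentOn g V) (hh : IsUnivalentOn h U) (hmaps : MapsTo h U V) :
    IsUnivalentOn (g ∘ h) U :=
  ⟨hg.differentiableOn.comp hh.differentiableOn hmaps, hg.injOn.comp hh.injOn hmaps⟩

theorem isOpen_image (hg : IsUnivalentOn g U) (hU : IsOpen U) : IsOpen (g '' U) := by
  rw [isOpen_iff_mem_nhds]
  rintro _ ⟨z, hz, rfl⟩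
  have hUz : U ∈ 𝓝 z := hU.mem_nhds hz
  rcases (hg.differentiableOn.analyticAt hUz).eventually_constant_or_nhds_le_map_nhds with
    hconst | hopen
  · have hsingle : ∀ᶠ y in 𝓝[≠] z, y = z := by
      filter_upwards [hconst.filter_mono nhdsWithin_le_nhds, nhdsWithin_le_nhds hUz] with y hy hyU
      exact hg.injOn hyU hz hy
    obtain ⟨y, hyz, hne⟩ := (hsingle.and self_mem_nhdsWithin).exists
    exact absurd hyz hne
  · exact hopen (image_mem_map hUz)

theorem ball_subset_image_ball (hg : IsUnivalentOn g (ball c R)) (hρ : 0 < ρ) (hρR : ρ < R)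
    (hm : ∀ z ∈ sphere c ρ, m ≤ ‖g z - g c‖) : ball (g c) m ⊆ g '' ball c ρ := by
  rcases le_or_gt m 0 with hm0 | hm0
  · simp [ball_eq_empty.2 hm0]
  have hsub : closedBall c ρ ⊆ ball c R := closedBall_subset_ball hρR
  have hopen : IsOpen (g '' ball c ρ) :=
    (hg.mono (ball_subset_ball hρR.le)).isOpen_image isOpen_ball
  have hclosed : IsClosed (g '' closedBall c ρ) :=
    ((isCompact_closedBall c ρ).image_of_continuousOn
      (hg.differentiableOn.continuousOn.mono hsub)).isClosed
  refine (convex_ball (g c) m).isPreconnected.subset_of_closure_inter_subset hopen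
    ⟨g c, mem_ball_self hm0, mem_image_of_mem g (mem_ball_self hρ)⟩ ?_
  rintro w ⟨hw, hwm⟩
  obtain ⟨z, hz, rfl⟩ := closure_minimal (image_mono ball_subset_closedBall) hclosed hw
  have hnot : z ∉ sphere c ρ := fun hzρ => (hm z hzρ).not_gt (mem_ball_iff_norm.1 hwm)
  exact mem_image_of_mem g (mem_ball.2 (lt_of_le_of_ne hz hnot))

theorem le_norm_sub_of_le_on_sphere (hg : IsUnivalentOn g (ball c R)) (hρ : 0 < ρ) (hρR : ρ < R)
    (hm : ∀ z ∈ sphere c ρ, m ≤ ‖g z - g c‖) {z : ℂ} (hz : z ∈ ball c R)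
    (hzρ : z ∉ ball c ρ) : m ≤ ‖g z - g c‖ := by
  by_contra! hlt
  obtain ⟨y, hy, hyz⟩ := hg.ball_subset_image_ball hρ hρR hm (mem_ball_iff_norm.2 hlt)
  exact hzρ (hg.injOn (ball_subset_ball hρR.le hy) hz hyz ▸ hy)

end IsUnivalentOn

theorem exists_differentiableOn_exp_eq_of_ne_zero {q : ℂ → ℂ} {c : ℂ} {R : ℝ}
    (hq : DifferentiableOn ℂ q (ball c R)) (hq0 : ∀ z ∈ ball c R, q z ≠ 0) :
    ∃ L : ℂ → ℂ, DifferentiableOn ℂ L (ball c R) ∧ L c = log (q c) ∧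
      ∀ z ∈ ball c R, exp (L z) = q z := by
  have hlogDeriv : DifferentiableOn ℂ (fun z => deriv q z / q z) (ball c R) :=
    (hq.deriv isOpen_ball).div hq hq0
  obtain ⟨L, hLc, hL⟩ := hlogDeriv.isExactOn_ball.with_val_at c (log (q c))
  refine ⟨L, fun z hz => (hL z hz).differentiableAt.differentiableWithinAt, hLc, fun z hz => ?_⟩
  have hder : ∀ y ∈ ball c R, HasDerivAt (fun y => exp (-L y) * q y) 0 y := by
    intro y hy
    have hqy := (hq.differentiableAt (isOpen_ball.mem_nhds hy)).hasDerivAt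
    convert! (hL y hy).neg.cexp.mul hqy using 1
    have := hq0 y hy
    field_simp
    ring
  have hc : c ∈ ball c R := mem_ball_self (pos_of_mem_ball hz)
  have hconst : exp (-L z) * q z = exp (-L c) * q c :=
    isOpen_ball.is_const_of_deriv_eq_zero (convex_ball c R).isPreconnected
      (fun y hy => (hder y hy).differentiableAt.differentiableWithinAt)
      (fun y hy => (hder y hy).deriv) hz hc
  rw [hLc, exp_neg, exp_neg, exp_log (hq0 c hc), inv_mul_cancel₀ (hq0 c hc),
    inv_mul_eq_one₀ (exp_ne_zero _)] at hconst
  exact hconst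

section AreaTheorem

variable {L : ℂ → ℂ} {α ρ m R : ℝ}

/-- The holomorphic function `z ^ (α + 1) * (-g ^ (-α) / α)'` for `g z = z * exp (L z)`, with the
powers chosen so that they cancel at the origin. It carries the area of the image of `g ^ (-α)`. -/
noncomputable def powDerivFactor (L : ℂ → ℂ) (α : ℝ) (z : ℂ) : ℂ :=
  exp (-α * L z) * (1 + z * deriv L z)

theorem powDerivFactor_zero (hL0 : L 0 = 0) : powDerivFactor L α 0 = 1 := by
  simp [powDerivFactor, hL0]

theorem differentiableOn_powDerivFactor {U : Set ℂ} (hU : IsOpen U)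
    (hL : DifferentiableOn ℂ L U) : DifferentiableOn ℂ (powDerivFactor L α) U := by
  have hL' : DifferentiableOn ℂ (deriv L) U := hL.deriv hU
  unfold powDerivFactor
  fun_prop

theorem deriv_powDerivFactor_zero (hL : AnalyticAt ℂ L 0) (hL0 : L 0 = 0) :
    deriv (powDerivFactor L α) 0 = (1 - α : ℝ) * deriv L 0 := by
  have hexp := (hL.differentiableAt.hasDerivAt.const_mul (-α : ℂ)).cexp
  have hlin := ((hasDerivAt_id (0 : ℂ)).mul hL.deriv.differentiableAt.hasDerivAt).const_add 1
  refine (hexp.mul hlin).deriv.trans ?_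
  simp only [hL0, Pi.mul_apply, id]
  push_cast
  simp only [mul_zero, exp_zero, neg_mul, mul_neg, one_mul, zero_mul, add_zero, mul_one]
  ring

theorem hasDerivAt_mul_exp {z : ℂ} (hL : DifferentiableAt ℂ L z) :
    HasDerivAt (fun z => z * exp (L z)) (exp (L z) * (1 + z * deriv L z)) z := by
  convert! (hasDerivAt_id z).mul hL.hasDerivAt.cexp using 1
  simp only [id]
  ring

theorem norm_sq_mul_rpow_eq_norm_powDerivFactor_sq (L : ℂ → ℂ) (α : ℝ) (z : ℂ) :
    ‖exp (L z) * (1 + z * deriv L z)‖ ^ 2 * ‖z * exp (L z)‖ ^ (-2 * α - 2) =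
      ‖z‖ ^ (-2 * α - 2) * ‖powDerivFactor L α z‖ ^ 2 := by
  have hexp : Real.exp (2 * (L z).re) * Real.exp ((L z).re * (-2 * α - 2)) =
      Real.exp (2 * (-α * L z).re) := by
    rw [← Real.exp_add, ← ofReal_neg, re_ofReal_mul]
    ring_nf
  simp only [powDerivFactor, norm_mul, norm_exp, mul_pow]
  rw [Real.mul_rpow (norm_nonneg z) (Real.exp_pos _).le, ← Real.exp_mul, ← Real.exp_nat_mul,
    ← Real.exp_nat_mul, Nat.cast_ofNat, ← hexp]
  ring

theorem setLIntegral_powDerivFactor_le (hg : IsUnivalentOn (fun z => z * exp (L z)) (ball 0 R))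
    (hL : DifferentiableOn ℂ L (ball 0 R)) (hα : 0 < α) (hρ : 0 < ρ) (hρR : ρ < R) (hm : 0 < m)
    (hmg : ∀ z ∈ sphere (0 : ℂ) ρ, m ≤ ‖z * exp (L z)‖) :
    ∫⁻ z in {z : ℂ | ‖z‖ ∈ Ioo ρ R},
        ENNReal.ofReal (‖z‖ ^ (-2 * α - 2) * ‖powDerivFactor L α z‖ ^ 2) ≤
      ENNReal.ofReal (2 * π * (m ^ (-2 * α) / (2 * α))) := by
  set S : Set ℂ := {z | ‖z‖ ∈ Ioo ρ R}
  have hSmeas : MeasurableSet S := measurable_norm measurableSet_Ioo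
  have hSball : S ⊆ ball 0 R := fun z hz => mem_ball_zero_iff.2 hz.2
  have hderiv : ∀ z ∈ S, HasDerivAt (fun z => z * exp (L z)) (exp (L z) * (1 + z * deriv L z)) z :=
    fun z hz => hasDerivAt_mul_exp (hL.differentiableAt (isOpen_ball.mem_nhds (hSball hz)))
  have himage : (fun z => z * exp (L z)) '' S ⊆ {w : ℂ | ‖w‖ ∈ Ici m} := by
    rintro _ ⟨z, hz, rfl⟩
    have hzρ : z ∉ ball 0 ρ := fun h => hz.1.not_gt (mem_ball_zero_iff.1 h)
    simpa using hg.le_norm_sub_of_le_on_sphere hρ hρR (by simpa using hmg) (hSball hz) hzρ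
  calc ∫⁻ z in S, ENNReal.ofReal (‖z‖ ^ (-2 * α - 2) * ‖powDerivFactor L α z‖ ^ 2)
      = ∫⁻ w in (fun z => z * exp (L z)) '' S, ENNReal.ofReal (‖w‖ ^ (-2 * α - 2)) := by
        rw [lintegral_image_eq_lintegral_norm_deriv_sq_mul hSmeas hderiv (hg.injOn.mono hSball)]
        refine lintegral_congr fun z => ?_
        rw [← ENNReal.ofReal_mul (by positivity), norm_sq_mul_rpow_eq_norm_powDerivFactor_sq]
    _ ≤ ∫⁻ w in {w : ℂ | ‖w‖ ∈ Ici m}, ENNReal.ofReal (‖w‖ ^ (-2 * α - 2)) :=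
        lintegral_mono_set himage
    _ = ENNReal.ofReal (2 * π * (m ^ (-2 * α) / (2 * α))) := by
        rw [setLIntegral_norm_rpow_Ici (by linarith) hm, sub_add_cancel, neg_mul, neg_div_neg_eq]

theorem integral_const_mul_rpow_add_const_mul_rpow {a b p q : ℝ} (hρ : 0 < ρ) (hR : 0 < R)
    (hp : p ≠ -1) (hq : q ≠ -1) :
    ∫ r in ρ..R, (a * r ^ p + b * r ^ q) =
      a * ((R ^ (p + 1) - ρ ^ (p + 1)) / (p + 1)) +
        b * ((R ^ (q + 1) - ρ ^ (q + 1)) / (q + 1)) := by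
  have h0 : (0 : ℝ) ∉ uIcc ρ R := notMem_uIcc_of_lt hρ hR
  rw [intervalIntegral.integral_add, intervalIntegral.integral_const_mul,
    intervalIntegral.integral_const_mul, integral_rpow (Or.inr ⟨hp, h0⟩),
    integral_rpow (Or.inr ⟨hq, h0⟩)]
  all_goals exact (intervalIntegral.intervalIntegrable_rpow (Or.inr h0)).const_mul _

theorem area_inequality (hg : IsUnivalentOn (fun z => z * exp (L z)) (ball 0 1))
    (hL : DifferentiableOn ℂ L (ball 0 1)) (hL0 : L 0 = 0) (hα : 0 < α) (hα1 : α < 1)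
    (hρ : 0 < ρ) (hρ1 : ρ < 1) (hm : 0 < m)
    (hmg : ∀ z ∈ sphere (0 : ℂ) ρ, m ≤ ‖z * exp (L z)‖) :
    α * (1 - α) * ‖deriv L 0‖ ^ 2 * (1 - ρ ^ (2 - 2 * α)) ≤
      1 + (m ^ (-2 * α) - ρ ^ (-2 * α)) := by
  have hα' : 0 < 1 - α := sub_pos.2 hα1
  have hLan : AnalyticAt ℂ L 0 := hL.analyticAt (ball_mem_nhds 0 one_pos)
  have harea := (ofReal_integral_le_setLIntegral_norm_rpow_mul
    (differentiableOn_powDerivFactor isOpen_ball hL) hρ hρ1.le (-2 * α - 2)).trans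
    (setLIntegral_powDerivFactor_le hg hL hα hρ hρ1 hm hmg)
  rw [ENNReal.ofReal_le_ofReal_iff (by positivity), mul_le_mul_iff_of_pos_left Real.two_pi_pos,
    powDerivFactor_zero hL0, deriv_powDerivFactor_zero hLan hL0, norm_one, norm_mul, norm_real,
    Real.norm_of_nonneg hα'.le,
    integral_const_mul_rpow_add_const_mul_rpow hρ one_pos (by linarith) (by linarith),
    show -2 * α - 2 + 1 + 1 = -2 * α by ring, show -2 * α - 2 + 3 + 1 = 2 - 2 * α by ring,
    Real.one_rpow, Real.one_rpow] at harea
  have hclear : 2 * α * (1 ^ 2 * ((1 - ρ ^ (-2 * α)) / (-2 * α)) +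
      ((1 - α) * ‖deriv L 0‖) ^ 2 * ((1 - ρ ^ (2 - 2 * α)) / (2 - 2 * α))) =
      ρ ^ (-2 * α) - 1 + α * (1 - α) * ‖deriv L 0‖ ^ 2 * (1 - ρ ^ (2 - 2 * α)) := by
    rw [show 2 - 2 * α = 2 * (1 - α) by ring]
    field_simp
    ring
  have hscaled := mul_le_mul_of_nonneg_left harea (by positivity : 0 ≤ 2 * α)
  rw [hclear, mul_div_cancel₀ _ (by positivity)] at hscaled
  linarith

theorem exists_eventually_mul_exp_le_norm_mul_exp (hL : DifferentiableAt ℂ L 0) (hL0 : L 0 = 0) :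
    ∃ C : ℝ, ∀ᶠ ρ : ℝ in 𝓝[>] 0, ∀ z ∈ sphere (0 : ℂ) ρ,
      ρ * Real.exp (-(C * ρ)) ≤ ‖z * exp (L z)‖ := by
  obtain ⟨C, hC⟩ := hL.hasDerivAt.isBigO_sub.bound
  obtain ⟨δ, hδ, hball⟩ := eventually_nhds_iff_ball.1 hC
  refine ⟨C, ?_⟩
  filter_upwards [Ioo_mem_nhdsGT hδ] with ρ hρ z hz
  have hzρ : ‖z‖ = ρ := mem_sphere_zero_iff_norm.1 hz
  have hLz : ‖L z‖ ≤ C * ρ := by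
    simpa [hL0, hzρ] using hball z (mem_ball_zero_iff.2 (hzρ.trans_lt hρ.2))
  rw [norm_mul, norm_exp, hzρ]
  have hre : -(C * ρ) ≤ (L z).re := by linarith [neg_abs_le (L z).re, abs_re_le_norm (L z)]
  have := hρ.1
  gcongr

theorem tendsto_rpow_nhdsGT_zero {p : ℝ} (hp : 0 < p) :
    Tendsto (fun ρ : ℝ => ρ ^ p) (𝓝[>] 0) (𝓝 0) := by
  simpa [Real.zero_rpow hp.ne'] using
    (Real.continuousAt_rpow_const 0 p (Or.inr hp.le)).tendsto.mono_left nhdsWithin_le_nhds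

theorem tendsto_exp_mul_sub_one_div_nhdsGT (k : ℝ) :
    Tendsto (fun ρ : ℝ => (Real.exp (k * ρ) - 1) / ρ) (𝓝[>] 0) (𝓝 k) := by
  have hderiv : HasDerivAt (fun ρ : ℝ => Real.exp (k * ρ)) k 0 := by
    simpa using ((hasDerivAt_id (0 : ℝ)).const_mul k).exp
  simpa [div_eq_inv_mul] using hderiv.tendsto_slope_zero_right

theorem mul_norm_deriv_sq_le_one_of_isUnivalentOn_mul_exp
    (hg : IsUnivalentOn (fun z => z * exp (L z)) (ball 0 1)) (hL : DifferentiableOn ℂ L (ball 0 1))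
    (hL0 : L 0 = 0) (hα : 0 < α) (hα2 : α < 1 / 2) :
    α * (1 - α) * ‖deriv L 0‖ ^ 2 ≤ 1 := by
  obtain ⟨C, hC⟩ := exists_eventually_mul_exp_le_norm_mul_exp
    (hL.differentiableAt (ball_mem_nhds 0 one_pos)) hL0
  have hbound : ∀ᶠ ρ : ℝ in 𝓝[>] 0, α * (1 - α) * ‖deriv L 0‖ ^ 2 * (1 - ρ ^ (2 - 2 * α)) ≤
      1 + ρ ^ (1 - 2 * α) * ((Real.exp (2 * α * C * ρ) - 1) / ρ) := by
    filter_upwards [hC, Ioo_mem_nhdsGT one_pos] with ρ hCρ ⟨hρ, hρ1⟩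
    have hpow : (ρ * Real.exp (-(C * ρ))) ^ (-2 * α) - ρ ^ (-2 * α) =
        ρ ^ (1 - 2 * α) * ((Real.exp (2 * α * C * ρ) - 1) / ρ) := by
      rw [Real.mul_rpow hρ.le (Real.exp_pos _).le, ← Real.exp_mul,
        show 1 - 2 * α = -2 * α + 1 by ring, Real.rpow_add_one hρ.ne',
        show -(C * ρ) * (-2 * α) = 2 * α * C * ρ by ring]
      field_simp
    rw [← hpow]
    exact area_inequality hg hL hL0 hα (by linarith) hρ hρ1 (by positivity) hCρ
  simpa using le_of_tendsto_of_tendsto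
    (((tendsto_rpow_nhdsGT_zero (by linarith : 0 < 2 - 2 * α)).const_sub 1).const_mul _)
    (((tendsto_rpow_nhdsGT_zero (by linarith : 0 < 1 - 2 * α)).mul
      (tendsto_exp_mul_sub_one_div_nhdsGT (2 * α * C))).const_add 1) hbound

theorem norm_deriv_le_two_of_isUnivalentOn_mul_exp
    (hg : IsUnivalentOn (fun z => z * exp (L z)) (ball 0 1)) (hL : DifferentiableOn ℂ L (ball 0 1))
    (hL0 : L 0 = 0) : ‖deriv L 0‖ ≤ 2 := by
  have hlim : Tendsto (fun α : ℝ => α * (1 - α) * ‖deriv L 0‖ ^ 2) (𝓝[<] (1 / 2))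
      (𝓝 ((1 / 2 : ℝ) * (1 - 1 / 2) * ‖deriv L 0‖ ^ 2)) :=
    (Continuous.tendsto (by fun_prop) _).mono_left nhdsWithin_le_nhds
  have hle : (1 / 2 : ℝ) * (1 - 1 / 2) * ‖deriv L 0‖ ^ 2 ≤ 1 := by
    refine le_of_tendsto hlim ?_
    filter_upwards [Ioo_mem_nhdsLT (by norm_num : (0 : ℝ) < 1 / 2)] with α hα
    exact mul_norm_deriv_sq_le_one_of_isUnivalentOn_mul_exp hg hL hL0 hα.1 hα.2
  exact le_of_sq_le_sq (by linarith) two_pos.le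

end AreaTheorem

namespace IsUnivalentOn

variable {g : ℂ → ℂ}

theorem exists_eq_add_mul_exp {R : ℝ} (hR : 0 < R) (hg : IsUnivalentOn g (ball 0 R))
    (hg' : deriv g 0 ≠ 0) :
    ∃ L : ℂ → ℂ, DifferentiableOn ℂ L (ball 0 R) ∧ L 0 = 0 ∧
      ∀ z ∈ ball (0 : ℂ) R, g z = g 0 + deriv g 0 * (z * exp (L z)) := by
  have hfactor : ∀ z, z * dslope g 0 z = g z - g 0 := fun z => by
    simpa using sub_smul_dslope g 0 z
  have hD : DifferentiableOn ℂ (dslope g 0) (ball 0 R) :=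
    (differentiableOn_dslope (ball_mem_nhds 0 hR)).2 hg.differentiableOn
  have hDne : ∀ z ∈ ball (0 : ℂ) R, dslope g 0 z ≠ 0 := by
    intro z hz hzero
    have hz0 : z = 0 := hg.injOn hz (mem_ball_self hR)
      (sub_eq_zero.1 (by rw [← hfactor, hzero, mul_zero]))
    exact hg' (by rwa [hz0, dslope_same] at hzero)
  obtain ⟨L, hL, hL0, hexp⟩ := exists_differentiableOn_exp_eq_of_ne_zero
    (hD.div_const (deriv g 0)) fun z hz => div_ne_zero (hDne z hz) hg'
  refine ⟨L, hL, by rw [hL0, dslope_same, div_self hg', log_one], fun z hz => ?_⟩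
  rw [hexp z hz, mul_left_comm, mul_div_cancel₀ _ hg', hfactor, add_sub_cancel]

theorem norm_iteratedDeriv_two_zero_le (hg : IsUnivalentOn g (ball 0 1)) (hg' : deriv g 0 ≠ 0) :
    ‖iteratedDeriv 2 g 0‖ ≤ 4 * ‖deriv g 0‖ := by
  obtain ⟨L, hL, hL0, hgL⟩ := hg.exists_eq_add_mul_exp one_pos hg'
  have hnormalized : IsUnivalentOn (fun z => z * exp (L z)) (ball 0 1) :=
    ⟨differentiableOn_id.mul hL.cexp, fun x hx y hy hxy => hg.injOn hx hy <| by
      rw [hgL x hx, hgL y hy, hxy]⟩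
  have hderiv : deriv g =ᶠ[𝓝 0] fun z => deriv g 0 * powDerivFactor L (-1) z := by
    filter_upwards [ball_mem_nhds (0 : ℂ) one_pos] with z hz
    have hzL := hasDerivAt_mul_exp (hL.differentiableAt (isOpen_ball.mem_nhds hz))
    have hgz := ((hzL.const_mul (deriv g 0)).const_add (g 0)).congr_of_eventuallyEq
      (eventually_of_mem (isOpen_ball.mem_nhds hz) hgL)
    simpa [powDerivFactor] using hgz.deriv
  have hsecond : iteratedDeriv 2 g 0 = deriv g 0 * (2 * deriv L 0) := by
    rw [iteratedDeriv_succ, iteratedDeriv_one, hderiv.deriv_eq, deriv_const_mul_field,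
      deriv_powDerivFactor_zero (hL.analyticAt (ball_mem_nhds 0 one_pos)) hL0]
    norm_num
  calc ‖iteratedDeriv 2 g 0‖ = ‖deriv g 0‖ * (2 * ‖deriv L 0‖) := by simp [hsecond]
    _ ≤ ‖deriv g 0‖ * (2 * 2) := by
        gcongr
        exact norm_deriv_le_two_of_isUnivalentOn_mul_exp hnormalized hL hL0
    _ = 4 * ‖deriv g 0‖ := by ring

end IsUnivalentOn

section DiscAutomorphism

variable {a z : ℂ}

/-- The automorphism of the unit disc that takes `0` to `a`, for `‖a‖ < 1`. -/
noncomputable def discAutomorphism (a z : ℂ) : ℂ :=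
  (z + a) / (1 + conj a * z)

theorem discAutomorphism_zero (a : ℂ) : discAutomorphism a 0 = a := by
  simp [discAutomorphism]

theorem one_add_conj_mul_ne_zero (ha : ‖a‖ < 1) (hz : ‖z‖ < 1) : 1 + conj a * z ≠ 0 := by
  intro h
  have hnorm : ‖conj a * z‖ = 1 := by rw [← norm_neg, ← eq_neg_of_add_eq_zero_left h, norm_one]
  rw [norm_mul, RCLike.norm_conj] at hnorm
  exact (mul_lt_one_of_nonneg_of_lt_one_left (norm_nonneg a) ha hz.le).ne hnorm

theorem hasDerivAt_discAutomorphism (ha : ‖a‖ < 1) (hz : ‖z‖ < 1) :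
    HasDerivAt (discAutomorphism a) ((1 - ‖a‖ ^ 2) / (1 + conj a * z) ^ 2) z := by
  convert! ((hasDerivAt_id z).add_const a).div
    (((hasDerivAt_id z).const_mul (conj a)).const_add 1) (one_add_conj_mul_ne_zero ha hz) using 1
  simp only [id, ← mul_conj']
  ring

theorem norm_sq_one_add_conj_mul_sub (a z : ℂ) :
    ‖1 + conj a * z‖ ^ 2 - ‖z + a‖ ^ 2 = (1 - ‖a‖ ^ 2) * (1 - ‖z‖ ^ 2) := by
  simp only [Complex.sq_norm, normSq_apply, add_re, add_im, mul_re, mul_im, one_re, one_im,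
    conj_re, conj_im]
  ring

theorem mapsTo_discAutomorphism (ha : ‖a‖ < 1) :
    MapsTo (discAutomorphism a) (ball 0 1) (ball 0 1) := by
  intro z hz
  have hz : ‖z‖ < 1 := mem_ball_zero_iff.1 hz
  rw [mem_ball_zero_iff, discAutomorphism, norm_div,
    div_lt_one (norm_pos_iff.2 (one_add_conj_mul_ne_zero ha hz))]
  refine lt_of_pow_lt_pow_left₀ 2 (norm_nonneg _) (sub_pos.1 ?_)
  rw [norm_sq_one_add_conj_mul_sub]
  exact mul_pos (sub_pos.2 (pow_lt_one₀ (norm_nonneg a) ha two_ne_zero))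
    (sub_pos.2 (pow_lt_one₀ (norm_nonneg z) hz two_ne_zero))

theorem one_sub_norm_sq_ne_zero (ha : ‖a‖ < 1) : (1 - ‖a‖ ^ 2 : ℂ) ≠ 0 := by
  exact_mod_cast (sub_pos.2 (pow_lt_one₀ (norm_nonneg a) ha two_ne_zero)).ne'

theorem isUnivalentOn_discAutomorphism (ha : ‖a‖ < 1) :
    IsUnivalentOn (discAutomorphism a) (ball 0 1) where
  differentiableOn z hz := (hasDerivAt_discAutomorphism ha
    (mem_ball_zero_iff.1 hz)).differentiableAt.differentiableWithinAt
  injOn x hx y hy hxy := by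
    have hx0 := one_add_conj_mul_ne_zero ha (mem_ball_zero_iff.1 hx)
    have hy0 := one_add_conj_mul_ne_zero ha (mem_ball_zero_iff.1 hy)
    rw [discAutomorphism, discAutomorphism, div_eq_div_iff hx0 hy0] at hxy
    have hfactor : (1 - (‖a‖ : ℂ) ^ 2) * (x - y) = 0 := by
      rw [← mul_conj']
      linear_combination hxy
    exact sub_eq_zero.1 ((mul_eq_zero.1 hfactor).resolve_left (one_sub_norm_sq_ne_zero ha))

theorem deriv_discAutomorphism_zero (ha : ‖a‖ < 1) :
    deriv (discAutomorphism a) 0 = 1 - ‖a‖ ^ 2 := by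
  simpa using (hasDerivAt_discAutomorphism ha (by simp : ‖(0 : ℂ)‖ < 1)).deriv

theorem iteratedDeriv_two_discAutomorphism_zero (ha : ‖a‖ < 1) :
    iteratedDeriv 2 (discAutomorphism a) 0 = -2 * conj a * (1 - ‖a‖ ^ 2) := by
  have hderiv : deriv (discAutomorphism a) =ᶠ[𝓝 0]
      fun z => (1 - ‖a‖ ^ 2) / (1 + conj a * z) ^ 2 :=
    eventually_of_mem (ball_mem_nhds 0 one_pos) fun z hz =>
      (hasDerivAt_discAutomorphism ha (mem_ball_zero_iff.1 hz)).deriv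
  rw [iteratedDeriv_succ, iteratedDeriv_one, hderiv.deriv_eq]
  have hquot := (hasDerivAt_const (0 : ℂ) (1 - (‖a‖ : ℂ) ^ 2)).div
    ((((hasDerivAt_id (0 : ℂ)).const_mul (conj a)).const_add 1).pow 2) (by simp)
  refine hquot.deriv.trans ?_
  simp only [id_eq, Pi.pow_apply, mul_zero, add_zero, one_pow, mul_one, Nat.cast_ofNat,
    Nat.add_one_sub_one, zero_sub, div_one, neg_mul, neg_inj]
  ring

end DiscAutomorphism

namespace IsUnivalentOn

variable {g : ℂ → ℂ}

theorem norm_koebe_transform_le (hg : IsUnivalentOn g (ball 0 1)) {a : ℂ} (ha : ‖a‖ < 1)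
    (hga : deriv g a ≠ 0) :
    ‖(1 - ‖a‖ ^ 2) * iteratedDeriv 2 g a - 2 * conj a * deriv g a‖ ≤ 4 * ‖deriv g a‖ := by
  have hnhds : ball (0 : ℂ) 1 ∈ 𝓝 0 := ball_mem_nhds 0 one_pos
  have hT := isUnivalentOn_discAutomorphism ha
  have hTan : AnalyticAt ℂ (discAutomorphism a) 0 := hT.differentiableOn.analyticAt hnhds
  have hgan : AnalyticAt ℂ g (discAutomorphism a 0) := by
    rw [discAutomorphism_zero]
    exact hg.differentiableOn.analyticAt (isOpen_ball.mem_nhds (mem_ball_zero_iff.2 ha))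
  have hderiv : deriv (g ∘ discAutomorphism a) 0 = (1 - ‖a‖ ^ 2) * deriv g a := by
    rw [deriv_comp _ hgan.differentiableAt hTan.differentiableAt, discAutomorphism_zero,
      deriv_discAutomorphism_zero ha, mul_comm]
  have hsecond : iteratedDeriv 2 (g ∘ discAutomorphism a) 0 =
      (1 - ‖a‖ ^ 2) * ((1 - ‖a‖ ^ 2) * iteratedDeriv 2 g a - 2 * conj a * deriv g a) := by
    rw [iteratedDeriv_comp_two hgan.contDiffAt hTan.contDiffAt, discAutomorphism_zero,
      deriv_discAutomorphism_zero ha, iteratedDeriv_two_discAutomorphism_zero ha]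
    ring
  have hs := one_sub_norm_sq_ne_zero ha
  have hbieberbach := (hg.comp hT (mapsTo_discAutomorphism ha)).norm_iteratedDeriv_two_zero_le
    (hderiv ▸ mul_ne_zero hs hga)
  rw [hderiv, hsecond, norm_mul, norm_mul, mul_left_comm] at hbieberbach
  exact le_of_mul_le_mul_left hbieberbach (norm_pos_iff.2 hs)

theorem one_sub_sq_mul_norm_iteratedDeriv_two_le (hg : IsUnivalentOn g (ball 0 1)) {a : ℂ}
    (ha : ‖a‖ < 1) (hga : deriv g a ≠ 0) :
    (1 - ‖a‖ ^ 2) * ‖iteratedDeriv 2 g a‖ ≤ (4 + 2 * ‖a‖) * ‖deriv g a‖ := by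
  have hpos : 0 ≤ 1 - ‖a‖ ^ 2 := sub_nonneg.2 (pow_le_one₀ (norm_nonneg a) ha.le)
  have hnorm₂ : ‖(1 - ‖a‖ ^ 2 : ℂ) * iteratedDeriv 2 g a‖ =
      (1 - ‖a‖ ^ 2) * ‖iteratedDeriv 2 g a‖ := by
    rw [norm_mul, ← ofReal_pow, ← ofReal_one, ← ofReal_sub, norm_real, Real.norm_of_nonneg hpos]
  have hnorm₁ : ‖2 * conj a * deriv g a‖ = 2 * ‖a‖ * ‖deriv g a‖ := by simp
  have htriangle := norm_sub_norm_le ((1 - ‖a‖ ^ 2 : ℂ) * iteratedDeriv 2 g a)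
    (2 * conj a * deriv g a)
  rw [hnorm₁, hnorm₂] at htriangle
  linarith [hg.norm_koebe_transform_le ha hga]

end IsUnivalentOn

theorem antitoneOn_norm_div_of_norm_deriv_mul_le {E : Type*} [NormedAddCommGroup E]
    [InnerProductSpace ℝ E] {D : Set ℝ} {u u' : ℝ → E} {B B' : ℝ → ℝ} (hD : Convex ℝ D)
    (hu : ∀ t ∈ D, HasDerivAt u (u' t) t) (hB : ∀ t ∈ D, HasDerivAt B (B' t) t)
    (hBpos : ∀ t ∈ D, 0 < B t) (hle : ∀ t ∈ D, u t ≠ 0 → ‖u' t‖ * B t ≤ ‖u t‖ * B' t) :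
    AntitoneOn (fun t => ‖u t‖ / B t) D := by
  have hder : ∀ t ∈ D, HasDerivAt (fun t => ‖u t‖ ^ 2 / B t ^ 2)
      (2 * B t * (inner ℝ (u t) (u' t) * B t - ‖u t‖ ^ 2 * B' t) / (B t ^ 2) ^ 2) t := by
    intro t ht
    convert! (hu t ht).norm_sq.div ((hB t ht).pow 2) (pow_ne_zero 2 (hBpos t ht).ne') using 1
    simp only [Pi.pow_apply]
    ring
  have hnum : ∀ t ∈ D, inner ℝ (u t) (u' t) * B t ≤ ‖u t‖ ^ 2 * B' t := by
    intro t ht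
    rcases eq_or_ne (u t) 0 with hzero | hne
    · simp [hzero]
    calc inner ℝ (u t) (u' t) * B t ≤ ‖u t‖ * ‖u' t‖ * B t :=
          mul_le_mul_of_nonneg_right (real_inner_le_norm _ _) (hBpos t ht).le
      _ = ‖u t‖ * (‖u' t‖ * B t) := mul_assoc _ _ _
      _ ≤ ‖u t‖ * (‖u t‖ * B' t) := mul_le_mul_of_nonneg_left (hle t ht hne) (norm_nonneg _)
      _ = ‖u t‖ ^ 2 * B' t := by ring
  have hanti : AntitoneOn (fun t => ‖u t‖ ^ 2 / B t ^ 2) D := by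
    refine antitoneOn_of_deriv_nonpos hD
      (fun t ht => (hder t ht).continuousAt.continuousWithinAt)
      (fun t ht => (hder t (interior_subset ht)).differentiableAt.differentiableWithinAt)
      fun t ht => ?_
    have ht := interior_subset ht
    have := hBpos t ht
    rw [(hder t ht).deriv]
    exact div_nonpos_of_nonpos_of_nonneg
      (mul_nonpos_of_nonneg_of_nonpos (by positivity) (sub_nonpos.2 (hnum t ht))) (by positivity)
  intro s hs t ht hst
  have := hBpos s hs
  refine le_of_sq_le_sq ?_ (by positivity)
  simpa only [div_pow] using hanti hs ht hst

theorem hasDerivAt_comp_ray {F : ℂ → ℂ} {F' e : ℂ} {t : ℝ} (hF : HasDerivAt F F' (t * e)) :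
    HasDerivAt (fun t : ℝ => F (t * e)) (F' * e) t := by
  simpa using (hF.comp (t : ℂ) ((hasDerivAt_id (t : ℂ)).mul_const e)).comp_ofReal

theorem hasDerivAt_one_add_div_one_sub_pow_three {t : ℝ} (ht : t < 1) :
    HasDerivAt (fun t : ℝ => (1 + t) / (1 - t) ^ 3) ((2 * t + 4) / (1 - t) ^ 4) t := by
  have hne : 1 - t ≠ 0 := (sub_pos.2 ht).ne'
  convert! ((hasDerivAt_id t).const_add 1).div (((hasDerivAt_id t).const_sub 1).pow 3)
    (pow_ne_zero 3 hne) using 1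
  simp only [id_eq, Pi.pow_apply, one_mul, Nat.cast_ofNat, Nat.add_one_sub_one, mul_neg, mul_one,
    sub_neg_eq_add]
  field_simp
  ring

theorem hasDerivAt_div_one_sub_sq {t : ℝ} (ht : t < 1) :
    HasDerivAt (fun t : ℝ => t / (1 - t) ^ 2) ((1 + t) / (1 - t) ^ 3) t := by
  have hne : 1 - t ≠ 0 := (sub_pos.2 ht).ne'
  convert! (hasDerivAt_id t).div (((hasDerivAt_id t).const_sub 1).pow 2) (pow_ne_zero 2 hne) using 1
  simp only [id_eq, Pi.pow_apply, one_mul, Nat.cast_ofNat, Nat.add_one_sub_one, pow_one, mul_neg,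
    mul_one, sub_neg_eq_add]
  field_simp
  ring

namespace IsUnivalentOn

variable {g : ℂ → ℂ} {z : ℂ}

theorem norm_deriv_le (hg : IsUnivalentOn g (ball 0 1)) (hz : ‖z‖ < 1) :
    ‖deriv g z‖ ≤ ‖deriv g 0‖ * ((1 + ‖z‖) / (1 - ‖z‖) ^ 3) := by
  obtain ⟨e, he, hze⟩ := Complex.exists_norm_mul_eq_self z
  rw [mul_comm] at hze
  have hnorm : ∀ t : ℝ, 0 ≤ t → ‖(t * e : ℂ)‖ = t := fun t ht => by simp [he, abs_of_nonneg ht]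
  have hray : ∀ t ∈ Ico (0 : ℝ) 1,
      HasDerivAt (fun t : ℝ => deriv g (t * e)) (iteratedDeriv 2 g (t * e) * e) t := by
    intro t ht
    have hmem : (t * e : ℂ) ∈ ball (0 : ℂ) 1 := mem_ball_zero_iff.2 ((hnorm t ht.1).trans_lt ht.2)
    rw [iteratedDeriv_succ, iteratedDeriv_one]
    exact hasDerivAt_comp_ray ((hg.differentiableOn.deriv isOpen_ball).differentiableAt
      (isOpen_ball.mem_nhds hmem)).hasDerivAt
  have hpos : ∀ t ∈ Ico (0 : ℝ) 1, 0 < (1 + t) / (1 - t) ^ 3 := fun t ht =>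
    div_pos (by linarith [ht.1]) (pow_pos (sub_pos.2 ht.2) 3)
  have hanti : AntitoneOn (fun t : ℝ => ‖deriv g (t * e)‖ / ((1 + t) / (1 - t) ^ 3)) (Ico 0 1) := by
    refine antitoneOn_norm_div_of_norm_deriv_mul_le (convex_Ico 0 1) hray
      (fun t ht => hasDerivAt_one_add_div_one_sub_pow_three ht.2) hpos fun t ht hne => ?_
    have hsub : 0 < 1 - t := sub_pos.2 ht.2
    have hsecond := hg.one_sub_sq_mul_norm_iteratedDeriv_two_le ((hnorm t ht.1).trans_lt ht.2) hne
    rw [hnorm t ht.1] at hsecond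
    rw [norm_mul, he, mul_one]
    calc ‖iteratedDeriv 2 g (t * e)‖ * ((1 + t) / (1 - t) ^ 3)
        = (1 - t ^ 2) * ‖iteratedDeriv 2 g (t * e)‖ / (1 - t) ^ 4 := by field_simp; ring
      _ ≤ (4 + 2 * t) * ‖deriv g (t * e)‖ / (1 - t) ^ 4 := by gcongr
      _ = ‖deriv g (t * e)‖ * ((2 * t + 4) / (1 - t) ^ 4) := by ring
  have hle := hanti (left_mem_Ico.2 one_pos) ⟨norm_nonneg z, hz⟩ (norm_nonneg z)
  rw [← div_le_iff₀ (hpos _ ⟨norm_nonneg z, hz⟩)]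
  simpa [hze] using hle

theorem norm_sub_le (hg : IsUnivalentOn g (ball 0 1)) (hz : ‖z‖ < 1) :
    ‖g z - g 0‖ ≤ ‖deriv g 0‖ * (‖z‖ / (1 - ‖z‖) ^ 2) := by
  obtain ⟨e, he, hze⟩ := Complex.exists_norm_mul_eq_self z
  rw [mul_comm] at hze
  have hnorm : ∀ t ∈ Icc 0 ‖z‖, ‖(t * e : ℂ)‖ = t := fun t ht => by simp [he, abs_of_nonneg ht.1]
  have hlt : ∀ t ∈ Icc 0 ‖z‖, t < 1 := fun t ht => ht.2.trans_lt hz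
  have hray : ∀ t ∈ Icc 0 ‖z‖,
      HasDerivAt (fun t : ℝ => g (t * e) - g 0) (deriv g (t * e) * e) t := by
    intro t ht
    have hmem : (t * e : ℂ) ∈ ball (0 : ℂ) 1 :=
      mem_ball_zero_iff.2 ((hnorm t ht).trans_lt (hlt t ht))
    exact (hasDerivAt_comp_ray
      (hg.differentiableOn.differentiableAt (isOpen_ball.mem_nhds hmem)).hasDerivAt).sub_const _
  have hB : ∀ t ∈ Icc 0 ‖z‖, HasDerivAt (fun t : ℝ => ‖deriv g 0‖ * (t / (1 - t) ^ 2))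
      (‖deriv g 0‖ * ((1 + t) / (1 - t) ^ 3)) t := fun t ht =>
    (hasDerivAt_div_one_sub_sq (hlt t ht)).const_mul _
  have hdistortion : ∀ t ∈ Ico 0 ‖z‖,
      ‖deriv g (t * e) * e‖ ≤ ‖deriv g 0‖ * ((1 + t) / (1 - t) ^ 3) := by
    intro t ht
    have ht := Ico_subset_Icc_self ht
    simpa only [norm_mul, he, mul_one, hnorm t ht] using
      hg.norm_deriv_le ((hnorm t ht).trans_lt (hlt t ht))
  have hgrowth := image_norm_le_of_norm_deriv_right_le_deriv_boundary'
    (fun t ht => (hray t ht).continuousAt.continuousWithinAt)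
    (fun t ht => (hray t (Ico_subset_Icc_self ht)).hasDerivWithinAt) (by simp)
    (fun t ht => (hB t ht).continuousAt.continuousWithinAt)
    (fun t ht => (hB t (Ico_subset_Icc_self ht)).hasDerivWithinAt)
    hdistortion (right_mem_Icc.2 (norm_nonneg z))
  rwa [hze] at hgrowth

end IsUnivalentOn

/-- The rotated Koebe function, extremal for growth of univalent functions in the direction
`conj e` when `‖e‖ = 1`. It has a pole at `e⁻¹`, where its value here is the junk value `0`. -/
noncomputable def rotatedKoebe (e z : ℂ) : ℂ :=
  z / (1 - e * z) ^ 2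

section RotatedKoebe

variable {e z : ℂ}

theorem norm_mul_lt_one_of_mem_ball (he : ‖e‖ ≤ 1) (hz : z ∈ ball (0 : ℂ) 1) : ‖e * z‖ < 1 := by
  rw [norm_mul]
  exact mul_lt_one_of_nonneg_of_lt_one_right he (norm_nonneg z) (mem_ball_zero_iff.1 hz)

theorem one_sub_ne_zero_of_norm_lt_one (hz : ‖z‖ < 1) : 1 - z ≠ 0 := fun h =>
  hz.ne (by rw [← sub_eq_zero.1 h, norm_one])

theorem isUnivalentOn_rotatedKoebe (he : ‖e‖ ≤ 1) : IsUnivalentOn (rotatedKoebe e) (ball 0 1) := by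
  have hden : ∀ z ∈ ball (0 : ℂ) 1, (1 - e * z) ^ 2 ≠ 0 := fun z hz =>
    pow_ne_zero 2 (one_sub_ne_zero_of_norm_lt_one (norm_mul_lt_one_of_mem_ball he hz))
  refine ⟨DifferentiableOn.div (by fun_prop) (by fun_prop) hden, fun x hx y hy hxy => ?_⟩
  have hfactor : (x - y) * (1 - e * x * (e * y)) = 0 := by
    linear_combination (div_eq_div_iff (hden x hx) (hden y hy)).1 hxy
  refine sub_eq_zero.1 ((mul_eq_zero.1 hfactor).resolve_right (one_sub_ne_zero_of_norm_lt_one ?_))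
  rw [norm_mul]
  exact mul_lt_one_of_nonneg_of_lt_one_left (norm_nonneg _) (norm_mul_lt_one_of_mem_ball he hx)
    (norm_mul_lt_one_of_mem_ball he hy).le

theorem rotatedKoebe_zero (e : ℂ) : rotatedKoebe e 0 = 0 := by
  simp [rotatedKoebe]

theorem hasDerivAt_rotatedKoebe_zero (e : ℂ) : HasDerivAt (rotatedKoebe e) 1 0 := by
  convert! (hasDerivAt_id (0 : ℂ)).div ((((hasDerivAt_id (0 : ℂ)).const_mul e).const_sub 1).pow 2)
    (by simp) using 1
  simp

theorem norm_rotatedKoebe_of_norm_eq_mul (hz : (‖z‖ : ℂ) = e * z) :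
    ‖rotatedKoebe e z‖ = ‖z‖ / (1 - ‖z‖) ^ 2 := by
  rw [rotatedKoebe, ← hz, norm_div, norm_pow, ← ofReal_one, ← ofReal_sub, norm_real,
    Real.norm_eq_abs, sq_abs]

end RotatedKoebe

theorem IsUnivalentOn.norm_div_one_sub_norm_sq_le {f : ℂ → ℂ} {z : ℂ}
    (hf : IsUnivalentOn f (ball 0 1)) (hmaps : MapsTo f (ball 0 1) (ball 0 1)) (h0 : f 0 = 0)
    (hz : ‖z‖ < 1) :
    ‖f z‖ / (1 - ‖f z‖) ^ 2 ≤ ‖deriv f 0‖ * (‖z‖ / (1 - ‖z‖) ^ 2) := by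
  obtain ⟨e, he, hez⟩ := Complex.exists_norm_eq_mul_self (f z)
  have hderiv : deriv (rotatedKoebe e ∘ f) 0 = deriv f 0 := by
    have hf0 := (hf.differentiableOn.differentiableAt (ball_mem_nhds 0 one_pos)).hasDerivAt
    have hk : HasDerivAt (rotatedKoebe e) 1 (f 0) := h0.symm ▸ hasDerivAt_rotatedKoebe_zero e
    simpa using (hk.comp 0 hf0).deriv
  have hgrowth := ((isUnivalentOn_rotatedKoebe he.le).comp hf hmaps).norm_sub_le hz
  rwa [hderiv, Function.comp_apply, Function.comp_apply, h0, rotatedKoebe_zero, sub_zero,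
    norm_rotatedKoebe_of_norm_eq_mul hez] at hgrowth

/-- The functional `I_upper` is nonpositive. -/
theorem stmt11 (f : ℂ → ℂ) (hd : DifferentiableOn ℂ f (ball (0 : ℂ) 1))
    (hmaps : Set.MapsTo f (ball (0 : ℂ) 1) (ball (0 : ℂ) 1))
    (hinj : Set.InjOn f (ball (0 : ℂ) 1))
    (h0 : f 0 = 0) (w : ℂ) (hw : w ∈ ball (0 : ℂ) 1) (hw0 : w ≠ 0) :
    Real.log (‖f w‖ / (1 - ‖f w‖) ^ 2 * ((1 - ‖w‖) ^ 2 / (‖w‖ * ‖deriv f 0‖))) ≤ 0 := by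
  have hw1 : ‖w‖ < 1 := mem_ball_zero_iff.1 hw
  have hsub : 0 < 1 - ‖w‖ := sub_pos.2 hw1
  have hf : IsUnivalentOn f (ball 0 1) := ⟨hd, hinj⟩
  refine Real.log_nonpos (by positivity) ?_
  calc ‖f w‖ / (1 - ‖f w‖) ^ 2 * ((1 - ‖w‖) ^ 2 / (‖w‖ * ‖deriv f 0‖))
      ≤ ‖deriv f 0‖ * (‖w‖ / (1 - ‖w‖) ^ 2) * ((1 - ‖w‖) ^ 2 / (‖w‖ * ‖deriv f 0‖)) := by
        gcongr
        exact hf.norm_div_one_sub_norm_sq_le hmaps h0 hw1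
    _ = ‖deriv f 0‖ / ‖deriv f 0‖ := by field_simp
    _ ≤ 1 := div_self_le_one _
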